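/- arXiv:0906.5607 — 2 statements merged into one kernel-verified Lean document; each statement's English description precedes it below -/
import Mathlib

section
/- Let ℓ₁, ℓ₂ ∈ ℝ with ℓ₁² + ℓ₂² < 1, let φ ∈ (−π/2, π/2) be defined by sin φ = −ℓ₂/√(1 − ℓ₁²), and let A be the 2×2 real matrix [[√((1−ℓ₁)/2)·cos φ, √((1−ℓ₁)/2)·sin φ],[0, √((1+ℓ₁)/2)]]. Then det A > 0, and for every symmetric 2×2 real matrix b satisfying b₁₁ + b₂₂ = ℓ₁(b₁₁ − b₂₂) + 2ℓ₂·b₁₂, the matrix ᵗA·b·A is symmetric and traceless. -/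
open Matrix Real

/-!
By cyclicity of the trace, `tr (ᵗA b A) = tr (b A ᵗA)`, and the condition on `φ` gives
`2 A ᵗA = [[1 - ℓ₁, -ℓ₂], [-ℓ₂, 1 + ℓ₁]]`. Pairing a symmetric `b` with this matrix yields
`b₁₁ + b₂₂ - ℓ₁ (b₁₁ - b₂₂) - 2 ℓ₂ b₁₂`, which vanishes exactly when the relation holds.
-/

theorem isSymm_transpose_mul_mul {m n R : Type*} [Fintype m] [NonUnitalCommSemiring R]
    {b : Matrix m m R} (hb : b.IsSymm) (A : Matrix m n R) : (Aᵀ * b * A).IsSymm := by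
  rw [IsSymm, transpose_mul, transpose_mul, transpose_transpose, hb.eq, Matrix.mul_assoc]

theorem sqrt_half_one_sub_mul_sqrt_half_one_add {x : ℝ} (hx : x ≤ 1) :
    √((1 - x) / 2) * √((1 + x) / 2) = √(1 - x ^ 2) / 2 := by
  have hnonneg : 0 ≤ (1 - x) / 2 := by linarith
  calc √((1 - x) / 2) * √((1 + x) / 2) = √((1 - x) / 2 * ((1 + x) / 2)) :=
        (Real.sqrt_mul hnonneg _).symm
    _ = √((1 - x ^ 2) / 2 ^ 2) := by ring_nf
    _ = √(1 - x ^ 2) / 2 := by rw [Real.sqrt_div' _ (by positivity), Real.sqrt_sq two_pos.le]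

/-- The matrix `A` by which a first order frame field is changed to a second order one. The angle
`φ` is a free parameter: `ℓ₂` enters only through the value of `sin φ`. -/
noncomputable def frameChange (ℓ₁ φ : ℝ) : Matrix (Fin 2) (Fin 2) ℝ :=
  !![√((1 - ℓ₁) / 2) * cos φ, √((1 - ℓ₁) / 2) * sin φ; 0, √((1 + ℓ₁) / 2)]

section FrameChange

variable {ℓ₁ : ℝ} (φ : ℝ)

theorem det_frameChange (hle : ℓ₁ ≤ 1) :
    (frameChange ℓ₁ φ).det = √(1 - ℓ₁ ^ 2) / 2 * cos φ := by
  rw [frameChange, det_fin_two_of, ← sqrt_half_one_sub_mul_sqrt_half_one_add hle]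
  ring

theorem frameChange_mul_transpose (hge : -1 ≤ ℓ₁) (hle : ℓ₁ ≤ 1) :
    frameChange ℓ₁ φ * (frameChange ℓ₁ φ)ᵀ =
      !![(1 - ℓ₁) / 2, √(1 - ℓ₁ ^ 2) / 2 * sin φ;
         √(1 - ℓ₁ ^ 2) / 2 * sin φ, (1 + ℓ₁) / 2] := by
  have hsub : √((1 - ℓ₁) / 2) ^ 2 = (1 - ℓ₁) / 2 := Real.sq_sqrt (by linarith)
  have hadd : √((1 + ℓ₁) / 2) ^ 2 = (1 + ℓ₁) / 2 := Real.sq_sqrt (by linarith)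
  calc frameChange ℓ₁ φ * (frameChange ℓ₁ φ)ᵀ
      = !![√((1 - ℓ₁) / 2) ^ 2 * (sin φ ^ 2 + cos φ ^ 2),
            √((1 - ℓ₁) / 2) * √((1 + ℓ₁) / 2) * sin φ;
          √((1 - ℓ₁) / 2) * √((1 + ℓ₁) / 2) * sin φ, √((1 + ℓ₁) / 2) ^ 2] := by
        rw [frameChange, eta_fin_two (!![_, _; _, _])ᵀ, mul_fin_two]
        simp only [transpose_apply, of_apply, cons_val_zero, cons_val_one, cons_val',
          cons_val_fin_one]
        ring_nf
    _ = _ := by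
        rw [sin_sq_add_cos_sq, mul_one, hsub, hadd, sqrt_half_one_sub_mul_sqrt_half_one_add hle]

theorem trace_frameChange_transpose_mul_mul (hge : -1 ≤ ℓ₁) (hle : ℓ₁ ≤ 1)
    {b : Matrix (Fin 2) (Fin 2) ℝ} (hb : b.IsSymm) :
    ((frameChange ℓ₁ φ)ᵀ * b * frameChange ℓ₁ φ).trace =
      (b 0 0 + b 1 1 - ℓ₁ * (b 0 0 - b 1 1)) / 2 + √(1 - ℓ₁ ^ 2) * sin φ * b 0 1 := by
  rw [trace_mul_cycle, frameChange_mul_transpose φ hge hle, trace_fin_two]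
  simp only [Matrix.mul_apply, Fin.sum_univ_two, of_apply, cons_val_zero, cons_val_one,
    cons_val', cons_val_fin_one, hb.apply 0 1]
  ring

end FrameChange

/-- Let `ℓ₁² + ℓ₂² < 1`, let `φ ∈ (−π/2, π/2)` satisfy `sin φ = −ℓ₂/√(1 − ℓ₁²)`, and let
`A = [[√((1−ℓ₁)/2)·cos φ, √((1−ℓ₁)/2)·sin φ], [0, √((1+ℓ₁)/2)]]`. Then `det A > 0`, and
for every symmetric `b` with `b₁₁ + b₂₂ = ℓ₁(b₁₁ − b₂₂) + 2ℓ₂·b₁₂`, the matrix `ᵗA·b·A`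
is symmetric and traceless. -/
theorem second_order_frame_normalization (ℓ₁ ℓ₂ : ℝ) (h : ℓ₁ ^ 2 + ℓ₂ ^ 2 < 1)
    (φ : ℝ) (hφ : φ ∈ Set.Ioo (-(π / 2)) (π / 2))
    (hsin : Real.sin φ = -ℓ₂ / Real.sqrt (1 - ℓ₁ ^ 2)) :
    0 < (!![Real.sqrt ((1 - ℓ₁) / 2) * Real.cos φ, Real.sqrt ((1 - ℓ₁) / 2) * Real.sin φ;
            0, Real.sqrt ((1 + ℓ₁) / 2)]).det ∧
    ∀ b : Matrix (Fin 2) (Fin 2) ℝ, b.IsSymm →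
      b 0 0 + b 1 1 = ℓ₁ * (b 0 0 - b 1 1) + 2 * ℓ₂ * b 0 1 →
      ((!![Real.sqrt ((1 - ℓ₁) / 2) * Real.cos φ, Real.sqrt ((1 - ℓ₁) / 2) * Real.sin φ;
           0, Real.sqrt ((1 + ℓ₁) / 2)])ᵀ * b *
        !![Real.sqrt ((1 - ℓ₁) / 2) * Real.cos φ, Real.sqrt ((1 - ℓ₁) / 2) * Real.sin φ;
           0, Real.sqrt ((1 + ℓ₁) / 2)]).IsSymm ∧
      Matrix.trace
        ((!![Real.sqrt ((1 - ℓ₁) / 2) * Real.cos φ, Real.sqrt ((1 - ℓ₁) / 2) * Real.sin φ;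
             0, Real.sqrt ((1 + ℓ₁) / 2)])ᵀ * b *
          !![Real.sqrt ((1 - ℓ₁) / 2) * Real.cos φ, Real.sqrt ((1 - ℓ₁) / 2) * Real.sin φ;
             0, Real.sqrt ((1 + ℓ₁) / 2)]) = 0 := by
  have hsq : 0 < 1 - ℓ₁ ^ 2 := by linarith [sq_nonneg ℓ₂]
  obtain ⟨hge, hle⟩ : -1 ≤ ℓ₁ ∧ ℓ₁ ≤ 1 := abs_le.mp ((sq_le_one_iff_abs_le_one ℓ₁).mp (by linarith))
  have hroot : 0 < √(1 - ℓ₁ ^ 2) := Real.sqrt_pos.mpr hsq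
  have hcos : 0 < cos φ := cos_pos_of_mem_Ioo hφ
  have hoff : √(1 - ℓ₁ ^ 2) * sin φ = -ℓ₂ := by rw [hsin, mul_div_cancel₀ _ hroot.ne']
  rw [← frameChange]
  refine ⟨?_, fun b hb hrel => ⟨isSymm_transpose_mul_mul hb _, ?_⟩⟩
  · rw [det_frameChange φ hle]
    positivity
  · rw [trace_frameChange_transpose_mul_mul φ hge hle hb, hoff]
    linarith
end

section
/- Let A be a 2×2 real matrix with det A > 0. Then ᵗA·b·A is traceless for every traceless symmetric 2×2 real matrix b if and only if ᵗA·A = r²·I₂ for some real r > 0. -/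
open Matrix

/-!
Cyclicity of the trace turns `trace (Aᴴ * b * A)` into `trace (b * (A * Aᴴ))`, so `A` preserves
tracelessness exactly when the Hermitian matrix `A * Aᴴ` is trace-orthogonal to every traceless
Hermitian matrix. It is then orthogonal to its own traceless part, which must vanish: `A * Aᴴ` is
scalar. A one-sided inverse of a square matrix being two-sided, so is `Aᴴ * A`.
-/

theorem mul_eq_smul_one_comm {K R : Type*} [Semifield K] [Semiring R] [Algebra K R]
    [IsDedekindFiniteMonoid R] {c : K} (hc : c ≠ 0) {x y : R} :
    x * y = c • 1 ↔ y * x = c • 1 := by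
  rw [← inv_smul_eq_iff₀ hc, ← smul_mul_assoc, mul_eq_one_comm, mul_smul_comm,
    inv_smul_eq_iff₀ hc]

section TracelessPart

variable {m 𝕜 : Type*} [Fintype m] [DecidableEq m] [Field 𝕜]

/-- The traceless part of a square matrix `S`, i.e. `S` minus the scalar matrix with the same trace.
In characteristic zero it vanishes exactly when `S` is scalar, and it is the matrix
against which a trace-orthogonal `S` is tested.
When `m` is empty, the coefficient is the junk value `0 / 0 = 0`. -/
def tracelessPart (S : Matrix m m 𝕜) : Matrix m m 𝕜 :=
  S - (trace S / Fintype.card m) • (1 : Matrix m m 𝕜)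

theorem trace_tracelessPart [CharZero 𝕜] (S : Matrix m m 𝕜) : trace (tracelessPart S) = 0 := by
  cases isEmpty_or_nonempty m
  · exact trace_eq_zero_of_isEmpty _
  · rw [tracelessPart, trace_sub, trace_smul, trace_one, smul_eq_mul,
      div_mul_cancel₀ _ (Nat.cast_ne_zero.2 Fintype.card_ne_zero), sub_self]

theorem isHermitian_tracelessPart [StarRing 𝕜] {S : Matrix m m 𝕜} (hS : S.IsHermitian) :
    (tracelessPart S).IsHermitian := by
  rw [IsHermitian, tracelessPart, conjTranspose_sub, conjTranspose_smul, conjTranspose_one,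
    star_div₀, star_natCast, ← trace_conjTranspose, hS.eq]

theorem mul_tracelessPart (b S : Matrix m m 𝕜) :
    b * tracelessPart S = b * S - (trace S / Fintype.card m) • b := by
  rw [tracelessPart, mul_sub, mul_smul_one]

end TracelessPart

section StarOrderedField

variable {m n 𝕜 : Type*} [Fintype n] [Field 𝕜] [PartialOrder 𝕜] [StarRing 𝕜] [StarOrderedRing 𝕜]

theorem tracelessPart_eq_zero_of_forall_trace_mul_eq_zero [Fintype m] [DecidableEq m]
    {S : Matrix m m 𝕜} (hS : S.IsHermitian)
    (h : ∀ b : Matrix m m 𝕜, b.IsHermitian → trace b = 0 → trace (b * S) = 0) :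
    tracelessPart S = 0 := by
  have hT := isHermitian_tracelessPart hS
  have hT_trace := trace_tracelessPart S
  rw [← trace_conjTranspose_mul_self_eq_zero_iff, hT.eq, mul_tracelessPart, trace_sub, trace_smul,
    h _ hT hT_trace, hT_trace, smul_zero, sub_zero]

theorem forall_trace_conjTranspose_mul_mul_eq_zero_iff [Fintype m] [DecidableEq m]
    (A : Matrix m n 𝕜) :
    (∀ b : Matrix m m 𝕜, b.IsHermitian → trace b = 0 → trace (Aᴴ * b * A) = 0) ↔
      ∃ c : 𝕜, A * Aᴴ = c • (1 : Matrix m m 𝕜) := by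
  have trace_cycle (b : Matrix m m 𝕜) : trace (Aᴴ * b * A) = trace (b * (A * Aᴴ)) := by
    rw [trace_mul_cycle, trace_mul_comm]
  simp only [trace_cycle]
  constructor
  · intro h
    have hA := isHermitian_mul_conjTranspose_self A
    exact ⟨_, sub_eq_zero.1 (tracelessPart_eq_zero_of_forall_trace_mul_eq_zero hA h)⟩
  · rintro ⟨c, hc⟩ b - hb
    rw [hc, mul_smul_one, trace_smul, hb, smul_zero]

theorem pos_of_mul_conjTranspose_eq_smul_one [DecidableEq m] {A : Matrix m n 𝕜} (hA : A ≠ 0) {c : 𝕜}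
    (h : A * Aᴴ = c • (1 : Matrix m m 𝕜)) : 0 < c := by
  obtain ⟨i, hi⟩ : ∃ i, A i ≠ 0 := Function.ne_iff.1 hA
  calc 0 < A i ⬝ᵥ star (A i) := dotProduct_self_star_pos_iff.2 hi
    _ = (A * Aᴴ) i i := rfl
    _ = c := by rw [h, Matrix.smul_apply, one_apply_eq, smul_eq_mul, mul_one]

end StarOrderedField

open scoped ComplexOrder in
theorem conformal_iff_preserves_traceless_general {n 𝕜 : Type*} [Fintype n] [DecidableEq n]
    [RCLike 𝕜] {A : Matrix n n 𝕜} (hA : A ≠ 0) :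
    (∀ b : Matrix n n 𝕜, b.IsHermitian → trace b = 0 → trace (Aᴴ * b * A) = 0) ↔
      ∃ r : ℝ, 0 < r ∧ Aᴴ * A = r ^ 2 • (1 : Matrix n n 𝕜) := by
  rw [forall_trace_conjTranspose_mul_mul_eq_zero_iff]
  constructor
  · rintro ⟨c, hc⟩
    obtain ⟨s, hs, rfl⟩ :=
      RCLike.pos_iff_exists_ofReal.1 (pos_of_mul_conjTranspose_eq_smul_one hA hc)
    refine ⟨√s, Real.sqrt_pos.2 hs, ?_⟩
    rw [Real.sq_sqrt hs.le, mul_eq_smul_one_comm hs.ne', hc, RCLike.real_smul_eq_coe_smul (K := 𝕜)]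
  · rintro ⟨r, hr, h⟩
    refine ⟨((r ^ 2 : ℝ) : 𝕜), ?_⟩
    rw [(mul_eq_smul_one_comm (pow_pos hr 2).ne').1 h, RCLike.real_smul_eq_coe_smul (K := 𝕜)]

/-- Let `A` be a `2×2` real matrix with `det A > 0`. Then `ᵗA·b·A` is traceless for every
traceless symmetric `2×2` real matrix `b` iff `ᵗA·A = r²·I₂` for some real `r > 0`. -/
theorem conformal_iff_preserves_traceless (A : Matrix (Fin 2) (Fin 2) ℝ)
    (hA : 0 < A.det) :
    (∀ b : Matrix (Fin 2) (Fin 2) ℝ, b.IsSymm → Matrix.trace b = 0 →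
      Matrix.trace (Aᵀ * b * A) = 0) ↔
    (∃ r : ℝ, 0 < r ∧ Aᵀ * A = r ^ 2 • (1 : Matrix (Fin 2) (Fin 2) ℝ)) := by
  have hA_ne : A ≠ 0 := by rintro rfl; simp at hA
  simpa only [isHermitian_iff_isSymm, conjTranspose_eq_transpose_of_trivial] using
    conformal_iff_preserves_traceless_general hA_ne
end
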